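/- For every positive integer n, m_I(Alt(5)^n) = 2n, where Alt(5)^n denotes the direct product of n copies of the alternating group on 5 points. -/

import Mathlib

/-!
A set `T` invariably generates `G` unless it is covered by the conjugates of a proper subgroup. By
Goursat's lemma, in a power `G ^ ι` of a perfect simple group it is enough to exclude subgroups with
a proper projection to some coordinate and graphs of isomorphisms between two coordinates; two
coordinates for which `T` does not exclude the latter are called linked. Suppose that invariable
generation of `G` is detected by meeting each of a family of classes `c k`, `k ∈ K`. The set `T`
then determines an equivalence relation on `ι × K` together with one extra point: pairs `(i, k)`
such that `c k` is missed by the `i`-th coordinate are identified with the extra point, and linked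
coordinates are identified. It becomes finer as `T` grows. If `S` invariably generates and `T` does
not, then adding some single element of `S` refines it strictly: this is clear if something is
missed, and otherwise each coordinate of `T` invariably generates `G`, so that an isomorphism
linking two coordinates is determined by `T` up to its effect on conjugacy classes and one element
of `S` suffices to exclude it. A minimal `S` therefore has at most `|ι| |K|` elements, and a union
of minimal invariable generating sets of the factors has exactly that many.

For `Alt(5)` the classes are the elements of order 3 and those of order 5. The elements of order
different from 5 fix one of the five points, those of order different from 3 fix one of the six
Sylow 5-subgroups, and a subgroup of order divisible by 15 has index at most 4, hence is everything.
The elements of order 5 form two conjugacy classes, and an automorphism fixing one of them fixes the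
other, because any two such elements are conjugate up to taking powers.
-/

/-- A subset `S` invariably generates `G` if for every choice of conjugators
(one for each element), the conjugated set generates `G`. -/
def InvGen {G : Type*} [Group G] (S : Set G) : Prop :=
  ∀ σ : G → G, Subgroup.closure ((fun g => (σ g)⁻¹ * g * σ g) '' S) = ⊤

/-- `S` is a minimal invariable generating set of `G`. -/
def MinInvGen {G : Type*} [Group G] (S : Set G) : Prop :=
  InvGen S ∧ ∀ T : Set G, T ⊂ S → ¬ InvGen T

/-- `S` is a minimal generating set of `G`. -/
def MinGen {G : Type*} [Group G] (S : Set G) : Prop :=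
  Subgroup.closure S = ⊤ ∧ ∀ T : Set G, T ⊂ S → Subgroup.closure T ≠ ⊤

/-- `m(G)`: largest cardinality of a minimal generating set of `G`. -/
noncomputable def mGen (G : Type*) [Group G] : ℕ :=
  sSup {n : ℕ | ∃ S : Set G, MinGen S ∧ S.ncard = n}

/-- `m_I(G)`: largest cardinality of a minimal invariable generating set of `G`. -/
noncomputable def mInv (G : Type*) [Group G] : ℕ :=
  sSup {n : ℕ | ∃ S : Set G, MinInvGen S ∧ S.ncard = n}

/-- `d_I(G)`: smallest cardinality of a minimal invariable generating set of `G`. -/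
noncomputable def dInv (G : Type*) [Group G] : ℕ :=
  sInf {n : ℕ | ∃ S : Set G, MinInvGen S ∧ S.ncard = n}

/-- The union of all conjugates of a subgroup `M`, as a set. -/
def conjUnion {G : Type*} [Group G] (M : Subgroup G) : Set G :=
  ⋃ g : G, (fun m => g⁻¹ * m * g) '' (M : Set G)

open Equiv Equiv.Perm Group
open scoped Pointwise

/-! ### Invariable generation -/

section InvariableGeneration

variable {G H : Type*} [Group G] [Group H]

theorem mem_conjUnion {M : Subgroup G} {x : G} : x ∈ conjUnion M ↔ ∃ m ∈ M, IsConj x m := by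
  simp only [conjUnion, Set.mem_iUnion, Set.mem_image, SetLike.mem_coe]
  constructor
  · rintro ⟨g, m, hm, rfl⟩
    exact ⟨m, hm, isConj_iff.2 ⟨g, by group⟩⟩
  · rintro ⟨m, hm, h⟩
    obtain ⟨g, rfl⟩ := isConj_iff.1 h
    exact ⟨g, _, hm, by group⟩

theorem image_conjUnion_subset (f : G →* H) (M : Subgroup G) :
    f '' conjUnion M ⊆ conjUnion (M.map f) := by
  rintro _ ⟨x, hx, rfl⟩
  obtain ⟨m, hm, hxm⟩ := mem_conjUnion.1 hx
  exact mem_conjUnion.2 ⟨f m, Subgroup.mem_map_of_mem f hm, f.map_isConj hxm⟩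

theorem invGen_iff_forall_subset_conjUnion {T : Set G} :
    InvGen T ↔ ∀ M : Subgroup G, T ⊆ conjUnion M → M = ⊤ := by
  classical
  refine ⟨fun hT M hM => ?_, fun h σ => h _ fun t ht => ?_⟩
  · have hconj : ∀ t ∈ T, ∃ g : G, g⁻¹ * t * g ∈ M := fun t ht => by
      obtain ⟨m, hm, htm⟩ := mem_conjUnion.1 (hM ht)
      obtain ⟨g, rfl⟩ := isConj_iff.1 htm
      exact ⟨g⁻¹, by simpa using hm⟩
    choose! σ hσ using hconj
    rw [eq_top_iff, ← hT σ, Subgroup.closure_le]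
    exact Set.image_subset_iff.2 hσ
  · exact mem_conjUnion.2 ⟨(σ t)⁻¹ * t * σ t, Subgroup.subset_closure (Set.mem_image_of_mem _ ht),
      isConj_iff.2 ⟨(σ t)⁻¹, by simp⟩⟩

theorem InvGen.mono {S T : Set G} (hS : InvGen S) (hST : S ⊆ T) : InvGen T :=
  invGen_iff_forall_subset_conjUnion.2 fun M hM =>
    invGen_iff_forall_subset_conjUnion.1 hS M (hST.trans hM)

theorem InvGen.image {T : Set G} (hT : InvGen T) {f : G →* H} (hf : Function.Surjective f) :
    InvGen (f '' T) := by
  refine invGen_iff_forall_subset_conjUnion.2 fun M hM => ?_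
  suffices h : M.comap f = ⊤ by
    rw [← Subgroup.map_comap_eq_self_of_surjective hf M, h, Subgroup.map_top_of_surjective f hf]
  refine invGen_iff_forall_subset_conjUnion.1 hT _ fun t ht => ?_
  obtain ⟨m, hm, htm⟩ := mem_conjUnion.1 (hM (Set.mem_image_of_mem f ht))
  obtain ⟨g, rfl⟩ := isConj_iff.1 htm
  obtain ⟨g, rfl⟩ := hf g
  exact mem_conjUnion.2 ⟨g * t * g⁻¹, by simpa using hm, isConj_iff.2 ⟨g, rfl⟩⟩

theorem invGen_insert_one {T : Set G} : InvGen (insert 1 T) ↔ InvGen T := by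
  have one_mem_conjUnion (M : Subgroup G) : 1 ∈ conjUnion M :=
    mem_conjUnion.2 ⟨1, M.one_mem, .refl 1⟩
  simp only [invGen_iff_forall_subset_conjUnion, Set.insert_subset_iff, one_mem_conjUnion,
    true_and]

theorem InvGen.nonempty [Nontrivial G] {T : Set G} (hT : InvGen T) : T.Nonempty := by
  rw [Set.nonempty_iff_ne_empty]
  rintro rfl
  exact bot_ne_top (invGen_iff_forall_subset_conjUnion.1 hT ⊥ (Set.empty_subset _))

theorem MinInvGen.one_notMem {S : Set G} (hS : MinInvGen S) : 1 ∉ S := fun h =>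
  hS.2 (S \ {1}) (Set.sdiff_singleton_ssubset.2 h) <| by
    rw [← invGen_insert_one, Set.insert_sdiff_singleton, Set.insert_eq_of_mem h]
    exact hS.1

/-- A transitive permutation group on at least two points is not the union of the conjugates of a
point stabilizer (Jordan). -/
theorem InvGen.exists_forall_smul_ne {X : Type*} [MulAction G X] [MulAction.IsPretransitive G X]
    [Nontrivial X] {T : Set G} (hT : InvGen T) : ∃ t ∈ T, ∀ x : X, t • x ≠ x := by
  by_contra! hfix
  obtain ⟨a, b, hab⟩ := exists_pair_ne X
  have hstab : MulAction.stabilizer G a = ⊤ :=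
    invGen_iff_forall_subset_conjUnion.1 hT _ fun t ht => by
      obtain ⟨x, hx⟩ := hfix t ht
      obtain ⟨g, rfl⟩ := MulAction.exists_smul_eq G x a
      exact mem_conjUnion.2 ⟨g * t * g⁻¹, by simp [MulAction.mem_stabilizer_iff, mul_smul, hx],
        isConj_iff.2 ⟨g, rfl⟩⟩
  obtain ⟨g, rfl⟩ := MulAction.exists_smul_eq G a b
  have hg : g ∈ MulAction.stabilizer G a := hstab ▸ Subgroup.mem_top g
  exact hab hg.symm

end InvariableGeneration

/-! ### Direct products -/

section Pi

variable {ι : Type*} {G : ι → Type*} [∀ i, Group (G i)]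

theorem InvGen.image_eval {T : Set (∀ i, G i)} (hT : InvGen T) (i : ι) :
    InvGen (Function.eval i '' T) :=
  hT.image (f := Pi.evalMonoidHom G i) (Function.surjective_eval i)

variable [DecidableEq ι]

theorem InvGen.iUnion_mulSingle [Finite ι] {S : ∀ i, Set (G i)} (hS : ∀ i, InvGen (S i)) :
    InvGen (⋃ i, Pi.mulSingle i '' S i) := by
  refine invGen_iff_forall_subset_conjUnion.2 fun M hM => ?_
  have hcomap (i : ι) : M.comap (MonoidHom.mulSingle G i) = ⊤ :=
    invGen_iff_forall_subset_conjUnion.1 (hS i) _ fun s hs => by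
      obtain ⟨m, hm, hsm⟩ := mem_conjUnion.1
        (hM (Set.mem_iUnion_of_mem i (Set.mem_image_of_mem _ hs)))
      obtain ⟨g, rfl⟩ := isConj_iff.1 hsm
      refine mem_conjUnion.2 ⟨g i * s * (g i)⁻¹, ?_, isConj_iff.2 ⟨g i, rfl⟩⟩
      rw [Subgroup.mem_comap, MonoidHom.mulSingle_apply]
      convert hm
      ext j
      rcases eq_or_ne j i with rfl | hji <;> simp [*]
  refine eq_top_iff.2 fun x _ => Subgroup.pi_mem_of_mulSingle_mem x fun i => ?_
  exact Subgroup.mem_comap.1 (hcomap i ▸ Subgroup.mem_top (x i))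

theorem MinInvGen.iUnion_mulSingle [Finite ι] {S : ∀ i, Set (G i)} (hS : ∀ i, MinInvGen (S i)) :
    MinInvGen (⋃ i, Pi.mulSingle i '' S i) := by
  refine ⟨InvGen.iUnion_mulSingle fun i => (hS i).1, fun T hTS hT => ?_⟩
  obtain ⟨_, hsS, hsT⟩ := Set.exists_of_ssubset hTS
  obtain ⟨i, s, hs, rfl⟩ := Set.mem_iUnion.1 hsS
  refine (hS i).2 (S i \ {s}) (Set.sdiff_singleton_ssubset.2 hs)
    (invGen_insert_one.1 ((hT.image_eval i).mono ?_))
  rintro _ ⟨t, ht, rfl⟩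
  obtain ⟨j, r, hr, rfl⟩ := Set.mem_iUnion.1 (hTS.subset ht)
  rcases eq_or_ne i j with rfl | hij
  · refine .inr ⟨by simpa using hr, ?_⟩
    intro hrs
    simp only [Function.eval, Pi.mulSingle_eq_same, Set.mem_singleton_iff] at hrs
    exact hsT (hrs ▸ ht)
  · exact .inl (Pi.mulSingle_eq_of_ne hij r)

theorem ncard_iUnion_mulSingle [Fintype ι] {S : ∀ i, Set (G i)} (hfin : ∀ i, (S i).Finite)
    (hS : ∀ i, 1 ∉ S i) : (⋃ i, Pi.mulSingle i '' S i).ncard = ∑ i, (S i).ncard := by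
  rw [Set.ncard_iUnion_of_finite fun i => (hfin i).image _, finsum_eq_sum_of_fintype]
  · exact Finset.sum_congr rfl fun i _ => Set.ncard_image_of_injective _ (Pi.mulSingle_injective i)
  · intro i j hij
    refine Set.disjoint_left.2 ?_
    rintro _ ⟨s, hs, rfl⟩ ⟨r, -, hrs⟩
    have hs1 := congrFun hrs i
    rw [Pi.mulSingle_eq_same, Pi.mulSingle_eq_of_ne hij] at hs1
    exact hS i (hs1 ▸ hs)

end Pi

/-! ### Subdirect products of simple groups -/

section Subdirect

variable {ι : Type*} {G : ι → Type*} [∀ i, Group (G i)]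

/-- The subgroup of `G i` consisting of the `i`-th coordinates of those elements of `H` that are
trivial on `J`. For `J = {j}` it is one of the two subgroups appearing in Goursat's lemma for the
projection of `H` to `G j × G i`. -/
def fiber (H : Subgroup (∀ i, G i)) (i : ι) (J : Set ι) : Subgroup (G i) :=
  (H ⊓ Subgroup.pi J fun _ => ⊥).map (Pi.evalMonoidHom G i)

variable {H : Subgroup (∀ i, G i)} {i j : ι} {J L : Set ι}

theorem mem_fiber {x : G i} : x ∈ fiber H i J ↔ ∃ h ∈ H, (∀ j ∈ J, h j = 1) ∧ h i = x := by
  simp [fiber, Subgroup.mem_pi, and_assoc]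

theorem fiber_empty : fiber H i ∅ = H.map (Pi.evalMonoidHom G i) := by
  simp [fiber, Subgroup.pi_empty]

theorem commutator_fiber_le : ⁅fiber H i J, fiber H i L⁆ ≤ fiber H i (J ∪ L) := by
  rw [Subgroup.commutator_le]
  intro x hx y hy
  obtain ⟨g, hg, hgJ, rfl⟩ := mem_fiber.1 hx
  obtain ⟨h, hh, hhL, rfl⟩ := mem_fiber.1 hy
  refine mem_fiber.2 ⟨g * h * g⁻¹ * h⁻¹, ?_, ?_, rfl⟩
  · exact H.mul_mem (H.mul_mem (H.mul_mem hg hh) (H.inv_mem hg)) (H.inv_mem hh)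
  · rintro j (hj | hj)
    · simp [hgJ j hj]
    · simp [hhL j hj]

theorem fiber_eq_top_of_forall_singleton [Finite ι] [IsPerfect (G i)] (h₀ : fiber H i ∅ = ⊤)
    (h₁ : ∀ j ∈ J, fiber H i {j} = ⊤) : fiber H i J = ⊤ := by
  induction J, J.toFinite using Set.Finite.induction_on with
  | empty => exact h₀
  | @insert j J _ _ ih =>
    rw [Set.forall_mem_insert] at h₁
    rw [eq_top_iff, ← IsPerfect.commutator_eq_top (G := G i), commutator_def]
    nth_rw 1 [← h₁.1, ← ih h₁.2]
    exact commutator_fiber_le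

theorem eq_top_of_forall_fiber_eq_top [Finite ι] [∀ i, IsPerfect (G i)]
    (h₀ : ∀ i, fiber H i ∅ = ⊤) (h₁ : ∀ i j, i ≠ j → fiber H i {j} = ⊤) : H = ⊤ := by
  classical
  refine eq_top_iff.2 fun x _ => Subgroup.pi_mem_of_mulSingle_mem x fun i => ?_
  have hi : fiber H i {i}ᶜ = ⊤ := fiber_eq_top_of_forall_singleton (h₀ i) fun j hj =>
    h₁ i j (Ne.symm hj)
  obtain ⟨h, hh, hJ, hx⟩ := mem_fiber.1 (hi ▸ Subgroup.mem_top (x i))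
  convert hh
  ext j
  rcases eq_or_ne j i with rfl | hji
  · rw [Pi.mulSingle_eq_same, hx]
  · rw [Pi.mulSingle_eq_of_ne hji, hJ j hji]

theorem fiber_normal (h₀ : fiber H i ∅ = ⊤) : (fiber H i J).Normal := by
  refine ⟨fun x hx g => ?_⟩
  obtain ⟨h, hh, hJ, rfl⟩ := mem_fiber.1 hx
  obtain ⟨k, hk, -, rfl⟩ := mem_fiber.1 (h₀ ▸ Subgroup.mem_top g)
  exact mem_fiber.2 ⟨k * h * k⁻¹, H.mul_mem (H.mul_mem hk hh) (H.inv_mem hk),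
    fun j hj => by simp [hJ j hj], rfl⟩

theorem exists_mulEquiv_of_fiber_singleton_eq_bot (hi : fiber H i ∅ = ⊤) (hj : fiber H j ∅ = ⊤)
    (hij : fiber H i {j} = ⊥) (hji : fiber H j {i} = ⊥) :
    ∃ e : G j ≃* G i, ∀ h ∈ H, h i = e (h j) := by
  have inj {a b : ι} (hab : fiber H a {b} = ⊥) (h k : H) (hhk : h.1 b = k.1 b) :
      h.1 a = k.1 a := by
    have : (h.1 / k.1) a ∈ fiber H a {b} :=
      mem_fiber.2 ⟨h.1 / k.1, H.div_mem h.2 k.2, by simp [hhk], rfl⟩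
    rwa [hab, Subgroup.mem_bot, Pi.div_apply, div_eq_one] at this
  have surj {a : ι} (ha : fiber H a ∅ = ⊤) (x : G a) : ∃ h : H, h.1 a = x := by
    obtain ⟨h, hh, -, rfl⟩ := mem_fiber.1 (ha ▸ Subgroup.mem_top x)
    exact ⟨⟨h, hh⟩, rfl⟩
  let f : H →* G j × G i := ((Pi.evalMonoidHom G j).prod (Pi.evalMonoidHom G i)).comp H.subtype
  obtain ⟨e, he⟩ := MonoidHom.exists_mulEquiv_range_eq_graph (f := f) (surj hj) (surj hi)
    fun h k => ⟨inj hij h k, inj hji h k⟩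
  refine ⟨e, fun h hh => ?_⟩
  have hmem : f ⟨h, hh⟩ ∈ e.toMonoidHom.graph := he ▸ Set.mem_range_self _
  exact (MonoidHom.mem_graph.1 hmem).symm

theorem exists_mulEquiv_of_fiber_singleton_ne_top [∀ i, IsSimpleGroup (G i)]
    (h₀ : ∀ i, fiber H i ∅ = ⊤) (hij : fiber H i {j} ≠ ⊤) :
    ∃ e : G j ≃* G i, ∀ h ∈ H, h i = e (h j) := by
  have hij' : fiber H i {j} = ⊥ := (fiber_normal (h₀ i)).eq_bot_or_eq_top.resolve_right hij
  refine exists_mulEquiv_of_fiber_singleton_eq_bot (h₀ i) (h₀ j) hij'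
    ((fiber_normal (h₀ j)).eq_bot_or_eq_top.resolve_right fun hji => hij ?_)
  refine eq_top_iff.2 fun x _ => ?_
  obtain ⟨h, hh, -, rfl⟩ := mem_fiber.1 (h₀ i ▸ Subgroup.mem_top x)
  obtain ⟨k, hk, hki, hkj⟩ := mem_fiber.1 (hji ▸ Subgroup.mem_top (h j))
  refine mem_fiber.2 ⟨h / k, H.div_mem hh hk, ?_, ?_⟩
  · simp [hkj]
  · simp [hki i rfl]

end Subdirect

section Criterion

variable {ι : Type*} {G : ι → Type*} [∀ i, Group (G i)]

/-- The coordinates `i` and `j` are linked by `T` if, up to conjugation, they agree on `T` up to an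
isomorphism `G j ≃* G i`; the set `T` is then covered by the conjugates of the graph of that
isomorphism. -/
def Linked (T : Set (∀ i, G i)) (i j : ι) : Prop :=
  ∃ e : G j ≃* G i, ∀ s ∈ T, IsConj (s i) (e (s j))

variable {S T : Set (∀ i, G i)} {i j k : ι}

theorem Linked.refl (T : Set (∀ i, G i)) (i : ι) : Linked T i i :=
  ⟨.refl _, fun _ _ => .refl _⟩

theorem Linked.symm : Linked T i j → Linked T j i
  | ⟨e, he⟩ => ⟨e.symm, fun s hs => by simpa using (e.symm.toMonoidHom.map_isConj (he s hs)).symm⟩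

theorem Linked.trans : Linked T i j → Linked T j k → Linked T i k
  | ⟨e, he⟩, ⟨f, hf⟩ => ⟨f.trans e, fun s hs =>
      (he s hs).trans (by simpa using e.toMonoidHom.map_isConj (hf s hs))⟩

theorem Linked.mono (h : S ⊆ T) : Linked T i j → Linked S i j
  | ⟨e, he⟩ => ⟨e, fun s hs => he s (h hs)⟩

theorem InvGen.not_linked [Nontrivial (G i)] (hT : InvGen T) (hij : i ≠ j) : ¬ Linked T i j := by
  classical
  rintro ⟨e, he⟩
  have htop : (Pi.evalMonoidHom G i).eqLocus (e.toMonoidHom.comp (Pi.evalMonoidHom G j)) = ⊤ :=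
    invGen_iff_forall_subset_conjUnion.1 hT _ fun t ht => by
      obtain ⟨g, hg⟩ := isConj_iff.1 (he t ht)
      refine mem_conjUnion.2 ⟨Pi.mulSingle i g * t * (Pi.mulSingle i g)⁻¹, ?_,
        isConj_iff.2 ⟨_, rfl⟩⟩
      change _ = _
      simp [hij.symm, hg]
  obtain ⟨x, hx⟩ := exists_ne (1 : G i)
  have : Pi.mulSingle i x ∈ _ := htop ▸ Subgroup.mem_top (Pi.mulSingle i x)
  have : Pi.mulSingle i x i = e (Pi.mulSingle i x j) := this
  simp [hij.symm, hx] at this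

theorem invGen_of_forall_not_linked [Finite ι] [∀ i, IsSimpleGroup (G i)] [∀ i, IsPerfect (G i)]
    (hT : ∀ i, InvGen (Function.eval i '' T)) (hlink : ∀ i j, i ≠ j → ¬ Linked T i j) :
    InvGen T := by
  refine invGen_iff_forall_subset_conjUnion.2 fun M hM => ?_
  have h₀ (i : ι) : fiber M i ∅ = ⊤ := by
    rw [fiber_empty]
    exact invGen_iff_forall_subset_conjUnion.1 (hT i) _
      ((Set.image_mono hM).trans (image_conjUnion_subset (Pi.evalMonoidHom G i) M))
  refine eq_top_of_forall_fiber_eq_top h₀ fun i j hij => ?_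
  by_contra hne
  obtain ⟨e, he⟩ := exists_mulEquiv_of_fiber_singleton_ne_top h₀ hne
  refine hlink i j hij ⟨e, fun t ht => ?_⟩
  obtain ⟨m, hm, htm⟩ := mem_conjUnion.1 (hM ht)
  have hti : IsConj (t i) (m i) := (Pi.evalMonoidHom G i).map_isConj htm
  have htj : IsConj (t j) (m j) := (Pi.evalMonoidHom G j).map_isConj htm
  exact hti.trans (he m hm ▸ (e.toMonoidHom.map_isConj htj).symm)

end Criterion

/-! ### Counting -/

section Counting

theorem card_quotient_lt_of_lt {α : Type*} [Finite α] {r s : Setoid α} (h : r < s) :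
    Nat.card (Quotient s) < Nat.card (Quotient r) := by
  have := Fintype.ofFinite (Quotient r)
  have := Fintype.ofFinite (Quotient s)
  rw [Nat.card_eq_fintype_card, Nat.card_eq_fintype_card]
  refine Fintype.card_lt_of_surjective_not_injective (Setoid.map_of_le h.le)
    (Quotient.ind fun a => ⟨⟦a⟧, rfl⟩) fun hinj => h.not_ge fun {a b} hab => ?_
  exact Quotient.exact (hinj (a₁ := ⟦a⟧) (a₂ := ⟦b⟧) (Quotient.sound hab))

theorem exists_subset_ncard_add_le {X : Type*} {S : Set X} {p : Set X → Prop} {f : Set X → ℕ}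
    {N : ℕ} (hN : ∀ T, f T ≤ N) (hf : ∀ T, ¬ p T → ∃ s ∈ S, f T < f (insert s T)) :
    ∃ T ⊆ S, p T ∧ T.ncard + f ∅ ≤ N := by
  by_contra! h
  have unbounded (m : ℕ) : ∃ T ⊆ S, T.ncard + f ∅ ≤ f T ∧ m ≤ f T := by
    induction m with
    | zero => exact ⟨∅, Set.empty_subset S, by simp⟩
    | succ m ih =>
      obtain ⟨T, hTS, hT, hm⟩ := ih
      obtain ⟨s, hs, hlt⟩ := hf T fun hp => (h T hTS hp).not_ge (hT.trans (hN T))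
      have := Set.ncard_insert_le s T
      exact ⟨insert s T, Set.insert_subset hs hTS, by lia, by lia⟩
  obtain ⟨T, -, -, hT⟩ := unbounded (N + 1)
  exact (hN T).not_gt hT

end Counting

/-! ### Powers of a simple group -/

section Missed

variable {ι G K : Type*}

/-- A pair `(i, k) : ι × K` is missed by `T` if no element of `T` has its `i`-th coordinate in
`c k`; the additional point `none` is always missed. -/
def Missed (c : K → Set G) (T : Set (ι → G)) (x : Option (ι × K)) : Prop :=
  ∀ p ∈ x, ∀ t ∈ T, t p.1 ∉ c p.2

variable {c : K → Set G} {T : Set (ι → G)} {i : ι} {k : K}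

theorem missed_none : Missed c T none := by
  simp [Missed]

theorem missed_some : Missed c T (some (i, k)) ↔ ∀ t ∈ T, t i ∉ c k := by
  simp [Missed]

end Missed

/-- A family of sets `c k` of elements of `G` detects invariable generation if `T` invariably
generates `G` exactly when it meets every `c k`. The sets have to be stable under automorphisms, and
an automorphism preserving the conjugacy classes of the elements of an invariable generating set
has to preserve all conjugacy classes. -/
structure DetectsInvGen {G K : Type*} [Group G] (c : K → Set G) : Prop where
  invGen_iff : ∀ T : Set G, InvGen T ↔ ∀ k, ∃ x ∈ T, x ∈ c k
  map_mem : ∀ (e : G ≃* G) (k : K), ∀ x ∈ c k, e x ∈ c k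
  isConj_map : ∀ T : Set G, InvGen T → ∀ e : G ≃* G, (∀ x ∈ T, IsConj x (e x)) →
    ∀ x, IsConj x (e x)

namespace DetectsInvGen

variable {G K : Type*} [Group G] {c : K → Set G}

theorem nonempty [Nontrivial G] (hc : DetectsInvGen c) : Nonempty K := by
  by_contra! hK
  simpa using ((hc.invGen_iff ∅).2 isEmptyElim).nonempty

theorem mem_of_isConj (hc : DetectsInvGen c) {x y : G} (h : IsConj x y) {k : K} (hx : x ∈ c k) :
    y ∈ c k := by
  obtain ⟨g, rfl⟩ := isConj_iff.1 h
  exact hc.map_mem (MulAut.conj g) k x hx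

theorem minInvGen_range (hc : DetectsInvGen c) {x : K → G} (hx : ∀ k l, x k ∈ c l ↔ k = l) :
    MinInvGen (Set.range x) := by
  refine ⟨(hc.invGen_iff _).2 fun k => ⟨x k, Set.mem_range_self k, (hx k k).2 rfl⟩,
    fun T hTS hT => ?_⟩
  obtain ⟨_, ⟨k, rfl⟩, hk⟩ := Set.exists_of_ssubset hTS
  obtain ⟨_, hl, hlk⟩ := (hc.invGen_iff T).1 hT k
  obtain ⟨l, rfl⟩ := hTS.subset hl
  exact hk ((hx l k).1 hlk ▸ hl)

variable {ι : Type*} {S T : Set (ι → G)} {i j : ι} {k : K}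

theorem missed_of_linked (hc : DetectsInvGen c) (hij : Linked T i j)
    (hi : Missed c T (some (i, k))) : Missed c T (some (j, k)) := by
  obtain ⟨e, he⟩ := hij
  rw [missed_some] at hi ⊢
  exact fun t ht htj => hi t ht (hc.mem_of_isConj (he t ht).symm (hc.map_mem e k _ htj))

/-- The equivalence relation measuring how far `T` is from invariable generation: it identifies all
missed points with each other, and `(i, k)` with `(j, k)` whenever `i` and `j` are linked. Enlarging
`T` refines it, and it is trivial once `T` invariably generates. -/
def fusion (hc : DetectsInvGen c) (T : Set (ι → G)) : Setoid (Option (ι × K)) where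
  r x y := (Missed c T x ∧ Missed c T y) ∨
    ∃ i j k, x = some (i, k) ∧ y = some (j, k) ∧ Linked T i j
  iseqv :=
    { refl := by
        rintro (_ | ⟨i, k⟩)
        · exact .inl ⟨missed_none, missed_none⟩
        · exact .inr ⟨i, i, k, rfl, rfl, .refl T i⟩
      symm := by
        rintro x y (⟨hx, hy⟩ | ⟨i, j, k, hx, hy, hij⟩)
        · exact .inl ⟨hy, hx⟩
        · exact .inr ⟨j, i, k, hy, hx, hij.symm⟩
      trans := by
        rintro _ _ _ (⟨hx, hy⟩ | ⟨i, j, k, rfl, rfl, hij⟩) (⟨hy', hz⟩ | ⟨j', l, k', hj, rfl, hjl⟩)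
        · exact .inl ⟨hx, hz⟩
        · subst hj
          exact .inl ⟨hx, hc.missed_of_linked hjl hy⟩
        · exact .inl ⟨hc.missed_of_linked hij.symm hy', hz⟩
        · obtain ⟨rfl, rfl⟩ : j = j' ∧ k = k' := by simpa using hj
          exact .inr ⟨i, l, k, rfl, rfl, hij.trans hjl⟩ }

theorem fusion_none_iff (hc : DetectsInvGen c) {x : Option (ι × K)} :
    hc.fusion T none x ↔ Missed c T x := by
  refine ⟨?_, fun hx => .inl ⟨missed_none, hx⟩⟩
  rintro (⟨-, hx⟩ | ⟨i, j, k, h, -⟩)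
  · exact hx
  · simp at h

theorem fusion_of_linked (hc : DetectsInvGen c) (hij : Linked T i j) (k : K) :
    hc.fusion T (some (i, k)) (some (j, k)) :=
  .inr ⟨i, j, k, rfl, rfl, hij⟩

theorem linked_of_fusion (hc : DetectsInvGen c) (hi : ¬ Missed c T (some (i, k)))
    (h : hc.fusion T (some (i, k)) (some (j, k))) : Linked T i j := by
  rcases h with ⟨h, -⟩ | ⟨i', j', k', hi', hj', h⟩
  · exact absurd h hi
  · simp only [Option.some.injEq, Prod.mk.injEq] at hi' hj'
    rwa [hi'.1, hj'.1]

theorem fusion_anti (hc : DetectsInvGen c) (h : S ⊆ T) : hc.fusion T ≤ hc.fusion S := by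
  rintro x y (⟨hx, hy⟩ | ⟨i, j, k, rfl, rfl, hij⟩)
  · exact .inl ⟨fun p hp t ht => hx p hp t (h ht), fun p hp t ht => hy p hp t (h ht)⟩
  · exact hc.fusion_of_linked (hij.mono h) k

theorem isConj_of_linked_insert (hc : DetectsInvGen c) (hT : InvGen (Function.eval j '' T))
    {e : G ≃* G} (he : ∀ t ∈ T, IsConj (t i) (e (t j))) {s : ι → G}
    (hs : Linked (insert s T) i j) : IsConj (s i) (e (s j)) := by
  obtain ⟨f, hf⟩ := hs
  have hfe : ∀ x ∈ Function.eval j '' T, IsConj x (f.trans e.symm x) := by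
    rintro _ ⟨t, ht, rfl⟩
    simpa using e.symm.toMonoidHom.map_isConj ((he t ht).symm.trans (hf t (.inr ht)))
  have hs : IsConj (e (s j)) (f (s j)) := by
    simpa using e.toMonoidHom.map_isConj (hc.isConj_map _ hT _ hfe (s j))
  exact (hf s (.inl rfl)).trans hs.symm

theorem exists_fusion_insert_lt [Finite ι] [IsSimpleGroup G] [IsPerfect G] (hc : DetectsInvGen c)
    (hS : InvGen S) (hT : ¬ InvGen T) : ∃ s ∈ S, hc.fusion (insert s T) < hc.fusion T := by
  by_contra! hlt
  have heq : ∀ s ∈ S, hc.fusion (insert s T) = hc.fusion T := fun s hs =>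
    (hc.fusion_anti (Set.subset_insert s T)).eq_of_not_lt (hlt s hs)
  have hmiss (i : ι) (k : K) : ¬ Missed c T (some (i, k)) := by
    obtain ⟨_, ⟨s, hs, rfl⟩, hsk⟩ := (hc.invGen_iff _).1 (hS.image_eval i) k
    rw [← hc.fusion_none_iff, ← heq s hs, hc.fusion_none_iff, missed_some]
    exact fun h => h s (.inl rfl) hsk
  have hTi (i : ι) : InvGen (Function.eval i '' T) := (hc.invGen_iff _).2 fun k => by
    simpa [missed_some] using hmiss i k
  refine hT (invGen_of_forall_not_linked hTi fun i j hij => ?_)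
  rintro ⟨e, he⟩
  refine hS.not_linked hij ⟨e, fun s hs => hc.isConj_of_linked_insert (hTi j) he ?_⟩
  obtain ⟨k⟩ := hc.nonempty
  refine hc.linked_of_fusion (k := k) ?_ (heq s hs ▸ hc.fusion_of_linked ⟨e, he⟩ k)
  rw [← hc.fusion_none_iff, heq s hs, hc.fusion_none_iff]
  exact hmiss i k

theorem ncard_le [Finite ι] [Finite K] [IsSimpleGroup G] [IsPerfect G] (hc : DetectsInvGen c)
    (hS : MinInvGen S) : S.ncard ≤ Nat.card ι * Nat.card K := by
  let f (T : Set (ι → G)) : ℕ := Nat.card (Quotient (hc.fusion T))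
  have hf (T : Set (ι → G)) : f T ≤ Nat.card ι * Nat.card K + 1 := by
    rw [← Nat.card_prod, ← Finite.card_option]
    exact Nat.card_le_card_of_surjective _ Quotient.mk_surjective
  obtain ⟨T, hTS, hT, hcard⟩ := exists_subset_ncard_add_le (S := S) (p := InvGen) hf fun T hT => by
    obtain ⟨s, hs, hlt⟩ := hc.exists_fusion_insert_lt hS.1 hT
    exact ⟨s, hs, card_quotient_lt_of_lt hlt⟩
  obtain rfl : T = S := hTS.eq_of_not_ssubset fun h => hS.2 T h hT
  have : 0 < f ∅ := Nat.card_pos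
  lia

end DetectsInvGen

/-! ### Simple groups, Sylow subgroups and alternating groups -/

section GroupTheory

variable {G : Type*} [Group G]

theorem card_dvd_factorial_index [IsSimpleGroup G] {H : Subgroup G} [H.FiniteIndex] (hH : H ≠ ⊤) :
    Nat.card G ∣ H.index.factorial := by
  have hcore : H.normalCore = ⊥ := H.normalCore_normal.eq_bot_or_eq_top.resolve_right fun h =>
    hH (top_le_iff.1 (h ▸ H.normalCore_le))
  rw [Subgroup.index, ← Nat.card_perm, ← Subgroup.index_bot, ← hcore, Subgroup.normalCore_eq_ker,
    Subgroup.index_ker]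
  exact Subgroup.card_subgroup_dvd_card _

theorem exists_smul_sylow_eq {p : ℕ} {g : G} (hg : IsPGroup p (Subgroup.zpowers g)) :
    ∃ P : Sylow p G, g • P = P := by
  obtain ⟨P, hP⟩ := hg.exists_le_sylow
  exact ⟨P, Sylow.smul_eq_iff_mem_normalizer.2
    (Subgroup.le_normalizer (hP (Subgroup.mem_zpowers g)))⟩

theorem exists_isConj_pow_of_orderOf_eq [Finite G] {p : ℕ} [Fact p.Prime]
    (hp : (Nat.card G).factorization p = 1) {x y : G} (hx : orderOf x = p) (hy : orderOf y = p) :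
    ∃ n : ℕ, IsConj y (x ^ n) := by
  let P : Sylow p G := Sylow.ofCard (Subgroup.zpowers x) (by simp [hx, hp])
  let Q : Sylow p G := Sylow.ofCard (Subgroup.zpowers y) (by simp [hy, hp])
  obtain ⟨g, hg⟩ := MulAction.exists_smul_eq G Q P
  have hmem : g * y * g⁻¹ ∈ ((g • Q : Sylow p G) : Subgroup G) :=
    Subgroup.smul_mem_pointwise_smul y (MulAut.conj g) Q (Subgroup.mem_zpowers y)
  rw [hg] at hmem
  obtain ⟨n, hn⟩ := mem_powers_iff_mem_zpowers.2 hmem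
  exact ⟨n, isConj_iff.2 ⟨g, hn.symm⟩⟩

theorem isConj_map_of_orderOf_eq [Finite G] {p : ℕ} [Fact p.Prime]
    (hp : (Nat.card G).factorization p = 1) {x y : G} (hx : orderOf x = p) (hy : orderOf y = p)
    {e : G ≃* G} (he : IsConj x (e x)) : IsConj y (e y) := by
  obtain ⟨n, hn⟩ := exists_isConj_pow_of_orderOf_eq hp hx hy
  have hpow : IsConj (x ^ n) (e (x ^ n)) := by simpa using he.pow n
  exact (hn.trans hpow).trans (e.toMonoidHom.map_isConj hn).symm

theorem isConj_of_not_centralizer_le {α : Type*} [Fintype α] [DecidableEq α]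
    {g h : alternatingGroup α} (hgh : IsConj (g : Perm α) h)
    (hg : ¬ Subgroup.centralizer {(g : Perm α)} ≤ alternatingGroup α) : IsConj g h := by
  obtain ⟨u, hu⟩ := isConj_iff.1 hgh
  obtain ⟨v, hv, hvA⟩ := SetLike.not_le_iff_exists.1 hg
  rw [Subgroup.mem_centralizer_singleton_iff] at hv
  by_cases huA : u ∈ alternatingGroup α
  · exact isConj_iff.2 ⟨⟨u, huA⟩, Subtype.ext hu⟩
  · have huv : u * v ∈ alternatingGroup α := by
      rw [mem_alternatingGroup, ← Ne, Int.units_ne_iff_eq_neg] at huA hvA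
      simp [mem_alternatingGroup, huA, hvA]
    refine isConj_iff.2 ⟨⟨u * v, huv⟩, Subtype.ext ?_⟩
    change u * v * g * (u * v)⁻¹ = h
    rw [← hu, mul_assoc u v, hv]
    group

theorem orderOf_eq_lcm_cycleType {α : Type*} [Fintype α] [DecidableEq α] (g : alternatingGroup α) :
    orderOf g = (g : Perm α).cycleType.lcm := by
  rw [lcm_cycleType, Subgroup.orderOf_coe]

end GroupTheory

/-! ### The alternating group on five points -/

namespace AlternatingFive

local notation "A₅" => alternatingGroup (Fin 5)

instance isPerfect : IsPerfect A₅ :=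
  ⟨commutator_alternatingGroup_eq_top (by simp)⟩

theorem natCard_eq : Nat.card A₅ = 60 := by
  rw [nat_card_alternatingGroup, Nat.card_fin]
  rfl

theorem cycleType_cases (g : A₅) :
    (g : Perm (Fin 5)).cycleType = 0 ∨ (g : Perm (Fin 5)).cycleType = {2, 2} ∨
      (g : Perm (Fin 5)).cycleType = {3} ∨ (g : Perm (Fin 5)).cycleType = {5} := by
  obtain ⟨g, hg⟩ := g
  have htwo : ∀ a ∈ g.cycleType, 2 ≤ a := fun a => two_le_of_mem_cycleType
  have hsum : g.cycleType.sum ≤ 5 := by simpa using g.sum_cycleType_le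
  have hcard : g.cycleType.card * 2 ≤ g.cycleType.sum := by
    simpa using Multiset.card_nsmul_le_sum htwo
  have heven : Even (g.cycleType.sum + g.cycleType.card) := by
    rw [mem_alternatingGroup, sign_of_cycleType] at hg
    rwa [← neg_one_pow_eq_one_iff_even (R := ℤˣ) (by decide)]
  change g.cycleType = 0 ∨ g.cycleType = {2, 2} ∨ g.cycleType = {3} ∨ g.cycleType = {5}
  generalize g.cycleType = m at htwo hsum hcard heven ⊢
  obtain h | h | h : m.card = 0 ∨ m.card = 1 ∨ m.card = 2 := by lia
  · exact .inl (Multiset.card_eq_zero.1 h)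
  · obtain ⟨a, rfl⟩ := Multiset.card_eq_one.1 h
    have : a = 3 ∨ a = 5 := by
      simp only [Multiset.mem_singleton, forall_eq] at htwo
      simp only [Multiset.sum_singleton, Multiset.card_singleton] at hsum heven
      grind
    simpa using this
  · obtain ⟨a, b, rfl⟩ := Multiset.card_eq_two.1 h
    obtain ⟨rfl, rfl⟩ : a = 2 ∧ b = 2 := by
      simp only [Multiset.insert_eq_cons, Multiset.mem_cons, Multiset.mem_singleton,
        forall_eq_or_imp, forall_eq] at htwo
      rw [h] at heven
      simp only [Multiset.insert_eq_cons, Multiset.sum_cons, Multiset.sum_singleton] at hsum heven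
      grind
    exact .inr (.inl rfl)

theorem orderOf_cases (g : A₅) :
    orderOf g = 1 ∨ orderOf g = 2 ∨ orderOf g = 3 ∨ orderOf g = 5 := by
  rw [orderOf_eq_lcm_cycleType]
  rcases cycleType_cases g with h | h | h | h <;> simp [h]

theorem isConj_coe_of_orderOf_eq {g h : A₅} (hgh : orderOf g = orderOf h) :
    IsConj (g : Perm (Fin 5)) h := by
  rw [orderOf_eq_lcm_cycleType, orderOf_eq_lcm_cycleType] at hgh
  rw [isConj_iff_cycleType_eq]
  rcases cycleType_cases g with hg | hg | hg | hg <;>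
  rcases cycleType_cases h with hh | hh | hh | hh <;>
  simp [hg, hh] at hgh ⊢

theorem cycleType_of_orderOf_ne_five {g : A₅} (hg : orderOf g ≠ 5) :
    (g : Perm (Fin 5)).cycleType = 0 ∨ (g : Perm (Fin 5)).cycleType = {2, 2} ∨
      (g : Perm (Fin 5)).cycleType = {3} := by
  rw [orderOf_eq_lcm_cycleType] at hg
  rcases cycleType_cases g with h | h | h | h <;> simp [h] at hg ⊢

theorem isConj_of_orderOf_eq {g h : A₅} (hg : orderOf g ≠ 5) (hgh : orderOf g = orderOf h) :
    IsConj g h := by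
  refine isConj_of_not_centralizer_le (isConj_coe_of_orderOf_eq hgh) ?_
  rw [centralizer_le_alternating_iff]
  rcases cycleType_of_orderOf_ne_five hg with h | h | h <;> simp [h, Nat.odd_iff]

theorem exists_smul_eq_of_orderOf_ne_five {g : A₅} (hg : orderOf g ≠ 5) :
    ∃ a : Fin 5, g • a = a := by
  by_contra! hfix
  have hsupp : (g : Perm (Fin 5)).support = Finset.univ :=
    Finset.eq_univ_of_forall fun a => mem_support.2 (hfix a)
  have hsum := sum_cycleType (g : Perm (Fin 5))
  rcases cycleType_of_orderOf_ne_five hg with h | h | h <;> simp [h, hsupp] at hsum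

theorem factorization_natCard_five : (Nat.card A₅).factorization 5 = 1 := by
  rw [natCard_eq, show 60 = 5 * 12 from rfl, Nat.factorization_mul_apply_of_coprime (by norm_num),
    Nat.prime_five.factorization_self, Nat.factorization_eq_zero_of_not_dvd (by norm_num)]

theorem card_sylow_five : Nat.card (Sylow 5 A₅) = 6 := by
  have : Fact (Nat.Prime 5) := ⟨Nat.prime_five⟩
  obtain P : Sylow 5 A₅ := default
  have hP : Nat.card P = 5 := by
    rw [P.card_eq_multiplicity, factorization_natCard_five, pow_one]
  have hindex : (P : Subgroup A₅).index = 12 := by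
    have hmul := (P : Subgroup A₅).card_mul_index
    rw [natCard_eq, hP] at hmul
    lia
  have hne : Nat.card (Sylow 5 A₅) ≠ 1 := fun h => by
    have : Subsingleton (Sylow 5 A₅) := (Nat.card_eq_one_iff_unique.1 h).1
    rcases P.normal_of_subsingleton.eq_bot_or_eq_top with hbot | htop
    · simp [hbot] at hP
    · simp [htop] at hindex
  have hdvd : Nat.card (Sylow 5 A₅) ∣ 12 := hindex ▸ P.card_dvd_index
  have hmod : Nat.card (Sylow 5 A₅) % 5 = 1 := card_sylow_modEq_one 5 A₅
  have hle := Nat.le_of_dvd (by norm_num) hdvd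
  interval_cases Nat.card (Sylow 5 A₅) <;> simp_all

theorem exists_orderOf_eq_two_smul_sylow_eq :
    ∃ g : A₅, orderOf g = 2 ∧ ∃ P : Sylow 5 A₅, g • P = P := by
  have : Fact (Nat.Prime 5) := ⟨Nat.prime_five⟩
  obtain P : Sylow 5 A₅ := default
  have hnormalizer : Nat.card (Subgroup.normalizer (P : Set A₅)) = 10 := by
    have hmul := (Subgroup.normalizer (P : Set A₅)).card_mul_index
    rw [← P.card_eq_index_normalizer, card_sylow_five, natCard_eq] at hmul
    lia
  have : Fact (Nat.Prime 2) := ⟨Nat.prime_two⟩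
  obtain ⟨g, hg⟩ := exists_prime_orderOf_dvd_card' (G := Subgroup.normalizer (P : Set A₅)) 2
    (by simp [hnormalizer])
  exact ⟨g, by simpa using hg, P, Sylow.smul_eq_iff_mem_normalizer.2 g.2⟩

theorem exists_smul_sylow_eq_of_orderOf_ne_three {g : A₅} (hg : orderOf g ≠ 3) :
    ∃ P : Sylow 5 A₅, g • P = P := by
  rcases orderOf_cases g with h | h | h | h
  · exact ⟨default, by rw [orderOf_eq_one_iff.1 h, one_smul]⟩
  · obtain ⟨t, ht, P, hP⟩ := exists_orderOf_eq_two_smul_sylow_eq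
    obtain ⟨u, rfl⟩ := isConj_iff.1 (isConj_of_orderOf_eq (by lia) (ht.trans h.symm))
    exact ⟨u • P, by rw [mul_smul, mul_smul, inv_smul_smul, hP]⟩
  · exact absurd h hg
  · exact exists_smul_sylow_eq (IsPGroup.of_card (n := 1) (by rw [Nat.card_zpowers, h, pow_one]))

theorem exists_orderOf_eq_three_of_invGen {T : Set A₅} (hT : InvGen T) :
    ∃ g ∈ T, orderOf g = 3 := by
  have : Fact (Nat.Prime 5) := ⟨Nat.prime_five⟩
  have : Nontrivial (Sylow 5 A₅) := Finite.one_lt_card_iff_nontrivial.1 <| by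
    rw [card_sylow_five]; norm_num
  obtain ⟨g, hg, hfix⟩ := hT.exists_forall_smul_ne (X := Sylow 5 A₅)
  refine ⟨g, hg, ?_⟩
  by_contra h
  obtain ⟨P, hP⟩ := exists_smul_sylow_eq_of_orderOf_ne_three h
  exact hfix P hP

theorem exists_orderOf_eq_five_of_invGen {T : Set A₅} (hT : InvGen T) :
    ∃ g ∈ T, orderOf g = 5 := by
  have := alternatingGroup.isPretransitive_of_three_le_card (Fin 5) (by simp)
  obtain ⟨g, hg, hfix⟩ := hT.exists_forall_smul_ne (X := Fin 5)
  refine ⟨g, hg, ?_⟩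
  by_contra h
  obtain ⟨a, ha⟩ := exists_smul_eq_of_orderOf_ne_five h
  exact hfix a ha

theorem eq_top_of_orderOf_eq {M : Subgroup A₅} {x y : A₅} (hx : x ∈ M) (hy : y ∈ M)
    (hx3 : orderOf x = 3) (hy5 : orderOf y = 5) : M = ⊤ := by
  by_contra hM
  have h3 : 3 ∣ Nat.card M := by simpa only [hx3] using M.orderOf_dvd_natCard hx
  have h5 : 5 ∣ Nat.card M := by simpa only [hy5] using M.orderOf_dvd_natCard hy
  have hmul : Nat.card M * M.index = 60 := by rw [M.card_mul_index, natCard_eq]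
  have hindex : M.index ∣ 4 := by
    refine Nat.dvd_of_mul_dvd_mul_left (k := 15) (by norm_num) ?_
    have h15 : 15 ∣ Nat.card M := Nat.Coprime.mul_dvd_of_dvd_of_dvd (by norm_num) h3 h5
    exact (mul_dvd_mul_right h15 M.index).trans hmul.dvd
  have hfactorial : 60 ∣ (4).factorial := by
    rw [← natCard_eq]
    exact (card_dvd_factorial_index hM).trans
      (Nat.factorial_dvd_factorial (Nat.le_of_dvd (by norm_num) hindex))
  revert hfactorial
  decide

theorem invGen_iff_exists_orderOf_eq {T : Set A₅} :
    InvGen T ↔ (∃ g ∈ T, orderOf g = 3) ∧ ∃ g ∈ T, orderOf g = 5 := by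
  refine ⟨fun hT => ⟨exists_orderOf_eq_three_of_invGen hT, exists_orderOf_eq_five_of_invGen hT⟩, ?_⟩
  rintro ⟨⟨x, hx, hx3⟩, y, hy, hy5⟩
  refine invGen_iff_forall_subset_conjUnion.2 fun M hM => ?_
  obtain ⟨x', hx', u, hu⟩ := mem_conjUnion.1 (hM hx)
  obtain ⟨y', hy', v, hv⟩ := mem_conjUnion.1 (hM hy)
  exact eq_top_of_orderOf_eq hx' hy' ((hu.orderOf_eq _).symm.trans hx3)
    ((hv.orderOf_eq _).symm.trans hy5)

theorem detectsInvGen_orderOf :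
    DetectsInvGen fun k : ({3, 5} : Finset ℕ) => {g : A₅ | orderOf g = k} where
  invGen_iff T := by simp [invGen_iff_exists_orderOf_eq]
  map_mem e k x hx := (e.orderOf_eq x).trans hx
  isConj_map T hT e he y := by
    have : Fact (Nat.Prime 5) := ⟨Nat.prime_five⟩
    by_cases hy : orderOf y = 5
    · obtain ⟨x, hxT, hx⟩ := exists_orderOf_eq_five_of_invGen hT
      exact isConj_map_of_orderOf_eq factorization_natCard_five hx hy (he x hxT)
    · exact isConj_of_orderOf_eq hy (e.orderOf_eq y).symm

theorem exists_orderOf_eq_of_mem {p : ℕ} (hp : p ∈ ({3, 5} : Finset ℕ)) :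
    ∃ g : A₅, orderOf g = p := by
  obtain rfl | rfl : p = 3 ∨ p = 5 := by simpa using hp
  · have : Fact (Nat.Prime 3) := ⟨Nat.prime_three⟩
    exact exists_prime_orderOf_dvd_card' 3 (by rw [natCard_eq]; norm_num)
  · have : Fact (Nat.Prime 5) := ⟨Nat.prime_five⟩
    exact exists_prime_orderOf_dvd_card' 5 (by rw [natCard_eq]; norm_num)

theorem exists_forall_orderOf_eq_iff :
    ∃ x : ({3, 5} : Finset ℕ) → A₅, ∀ k l : ({3, 5} : Finset ℕ), orderOf (x k) = l ↔ k = l := by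
  choose x hx using fun k : ({3, 5} : Finset ℕ) => exists_orderOf_eq_of_mem k.2
  exact ⟨x, fun k l => by rw [hx, Subtype.coe_inj]⟩

end AlternatingFive

theorem stmt11_general {ι G K : Type*} [Finite ι] [Finite K] [Group G] [IsSimpleGroup G]
    [IsPerfect G] {c : K → Set G} (hc : DetectsInvGen c) {x : K → G}
    (hx : ∀ k l, x k ∈ c l ↔ k = l) : mInv (ι → G) = Nat.card ι * Nat.card K := by
  classical
  have := Fintype.ofFinite ι
  have hmin : MinInvGen (Set.range x) := hc.minInvGen_range hx
  have hinj : Function.Injective x := fun k l hkl => (hx k l).1 (hkl ▸ (hx l l).2 rfl)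
  refine IsGreatest.csSup_eq ⟨⟨_, MinInvGen.iUnion_mulSingle fun _ => hmin, ?_⟩, ?_⟩
  · rw [ncard_iUnion_mulSingle (fun _ => Set.finite_range x) fun _ => hmin.one_notMem]
    simp [Set.ncard_range_of_injective hinj]
  · rintro _ ⟨S, hS, rfl⟩
    exact hc.ncard_le hS

/-- For every positive integer `n`, `m_I(Alt(5)^n) = 2n`. -/
theorem stmt11 (n : ℕ) (hn : 0 < n) :
    mInv (Fin n → alternatingGroup (Fin 5)) = 2 * n := by
  obtain ⟨x, hx⟩ := AlternatingFive.exists_forall_orderOf_eq_iff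
  rw [stmt11_general AlternatingFive.detectsInvGen_orderOf hx, Nat.card_fin,
    Nat.card_eq_finsetCard, Finset.card_pair (by norm_num), mul_comm]
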